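/- arXiv:2207.08172 — 3 statements merged into one kernel-verified Lean document; each statement's English description precedes it below -/
import Mathlib

section
/- For every δ > 0 the partial products f^N converge, as N → ∞, uniformly on Ω_δ = {z ∈ ℂ : dist(z, 𝒞(a,b)) ≥ δ} to a limit function f_{a,b}; in particular the infinite product f_{a,b}(z) = ((z − b_0)/(z − a_0)) ∏_{i=1}^∞ (z − a_i)/(z − b_i) converges at every point of ℂ ∖ 𝒞(a,b) and defines a holomorphic (complex differentiable) function on ℂ ∖ 𝒞(a,b). -/
open Filter Topology

/-- The Cantor-type set 𝒞(a,b) = [a₀,b₀] ∖ ⋃_{i≥1} (aᵢ,bᵢ), viewed as a subset of ℂ. -/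
noncomputable def cantorAB (a b : ℕ → ℝ) : Set ℂ :=
  (fun x : ℝ => (x : ℂ)) '' (Set.Icc (a 0) (b 0) \ ⋃ i : ℕ, Set.Ioo (a (i + 1)) (b (i + 1)))

/-- The partial product f^N(z) = ((z−b₀)/(z−a₀)) ∏_{i=1}^N (z−aᵢ)/(z−bᵢ). -/
noncomputable def partialProd (a b : ℕ → ℝ) (N : ℕ) (z : ℂ) : ℂ :=
  ((z - (b 0 : ℂ)) / (z - (a 0 : ℂ))) *
    ∏ i ∈ Finset.Icc 1 N, ((z - (a i : ℂ)) / (z - (b i : ℂ)))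

/-! A product `∏ (z - wᵢ) / (z - pᵢ)` is `∏ (1 + (pᵢ - wᵢ) / (z - pᵢ))`, and if its poles `pᵢ` lie
in `K`, then its perturbations are at most `|pᵢ - wᵢ| / δ` where `dist(z, K) ≥ δ`. For `f^N` the
poles `a₀, b₁, b₂, …` lie in `𝒞(a, b)` and `|pᵢ - wᵢ|` is the length of `[aᵢ, bᵢ]`; the gaps being
disjoint and bounded, these lengths are summable and the product converges uniformly by the
Weierstrass test. Every point off the closed set `𝒞(a, b)` has a neighbourhood on which the distance
to `𝒞(a, b)` is bounded below, so the limit is holomorphic. -/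

open Metric Set MeasureTheory

section InfiniteProducts

variable {α ι R 𝕜 : Type*}

-- The product converges in the complete ring of bounded functions on `s`, whose norm is the
-- supremum; the discrete topology makes every function continuous.
lemma hasProdUniformlyOn_one_add_of_summable [NormedCommRing R] [NormOneClass R] [CompleteSpace R]
    {f : ι → α → R} {u : ι → ℝ} {s : Set α} (hu : Summable u)
    (hf : ∀ i, ∀ x ∈ s, ‖f i x‖ ≤ u i) :
    HasProdUniformlyOn (fun i x ↦ 1 + f i x) (fun x ↦ ∏' i, (1 + f i x)) s := by
  refine MultipliableUniformlyOn.hasProdUniformlyOn ?_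
  rcases s.eq_empty_or_nonempty with rfl | hs
  · exact ⟨1, hasProdUniformlyOn_iff_tendstoUniformlyOn.mpr tendstoUniformlyOn_empty⟩
  have : Nonempty s := hs.to_subtype
  let _ : TopologicalSpace s := ⊥
  have : DiscreteTopology s := ⟨rfl⟩
  let g (i : ι) : BoundedContinuousFunction s R :=
    .ofNormedAddCommGroupDiscrete (fun x ↦ f i x) (u i) fun x ↦ hf i x x.2
  have hg : Summable fun i ↦ ‖g i‖ :=
    hu.of_nonneg_of_le (fun _ ↦ norm_nonneg _) fun i ↦
      BoundedContinuousFunction.norm_le_of_nonempty.mpr fun x ↦ hf i x x.2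
  obtain ⟨G, hG⟩ := multipliable_one_add_of_summable hg
  have hunif : TendstoUniformly (fun t ↦ ⇑(∏ i ∈ t, (1 + g i))) G atTop :=
    BoundedContinuousFunction.tendsto_iff_tendstoUniformly.mp hG
  refine HasProdUniformlyOn.multipliableUniformlyOn (g := Function.extend Subtype.val G 0) ?_
  rw [hasProdUniformlyOn_iff_tendstoUniformlyOn, tendstoUniformlyOn_iff_tendstoUniformly_comp_coe,
    Function.extend_comp Subtype.val_injective]
  convert hunif with t
  simp [g]

lemma one_add_sub_div_sub [Field 𝕜] {z p : 𝕜} (hz : z ≠ p) (w : 𝕜) :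
    1 + (p - w) / (z - p) = (z - w) / (z - p) := by
  rw [one_add_div (sub_ne_zero.mpr hz), sub_add_sub_cancel]

lemma hasProdUniformlyOn_sub_div_sub [NormedField 𝕜] [CompleteSpace 𝕜] {w p : ι → 𝕜} {K : Set 𝕜}
    (hwp : Summable fun i ↦ ‖p i - w i‖) (hp : ∀ i, p i ∈ K) {δ : ℝ} (hδ : 0 < δ) :
    HasProdUniformlyOn (fun i z ↦ (z - w i) / (z - p i))
      (fun z ↦ ∏' i, (z - w i) / (z - p i)) {z | δ ≤ infDist z K} := by
  have hdist (i : ι) {z : 𝕜} (hz : δ ≤ infDist z K) : δ ≤ ‖z - p i‖ :=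
    hz.trans ((infDist_le_dist_of_mem (hp i)).trans_eq (dist_eq_norm _ _))
  have hfactor (i : ι) {z : 𝕜} (hz : δ ≤ infDist z K) :
      1 + (p i - w i) / (z - p i) = (z - w i) / (z - p i) :=
    one_add_sub_div_sub (sub_ne_zero.mp (norm_pos_iff.mp (hδ.trans_le (hdist i hz)))) (w i)
  have hprod := hasProdUniformlyOn_one_add_of_summable (s := {z | δ ≤ infDist z K})
    (f := fun i z ↦ (p i - w i) / (z - p i)) (hwp.div_const δ) fun i z hz ↦ by
      rw [norm_div]
      exact div_le_div_of_nonneg_left (norm_nonneg _) hδ (hdist i hz)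
  refine (hprod.congr <| .of_forall fun t z hz ↦ ?_).congr_right fun z hz ↦ ?_
  · exact Finset.prod_congr rfl fun i _ ↦ hfactor i hz
  · exact tprod_congr fun i ↦ hfactor i hz

lemma tendstoLocallyUniformlyOn_compl_of_le_infDist {β : Type*} [PseudoMetricSpace α]
    [UniformSpace β] {F : ι → α → β} {f : α → β} {l : Filter ι} {K : Set α} (hK : IsClosed K)
    (hne : K.Nonempty)
    (hF : ∀ δ : ℝ, 0 < δ → TendstoUniformlyOn F f l {x | δ ≤ infDist x K}) :
    TendstoLocallyUniformlyOn F f l Kᶜ := by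
  refine tendstoLocallyUniformlyOn_of_forall_exists_nhds fun x hx ↦ ?_
  have hpos : 0 < infDist x K := (hK.notMem_iff_infDist_pos hne).mp hx
  exact ⟨_, mem_nhdsWithin_of_mem_nhds <|
    (continuous_infDist_pt K).continuousAt.eventually (Ici_mem_nhds (half_lt_self hpos)),
    hF _ (half_pos hpos)⟩

end InfiniteProducts

section Intervals

lemma summable_sub_of_pairwise_disjoint_Ioo {ι : Type*} [Countable ι] {a b : ι → ℝ} {s : Set ℝ}
    (hs : volume s ≠ ⊤) (hab : ∀ i, a i ≤ b i) (hsub : ∀ i, Ioo (a i) (b i) ⊆ s)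
    (hdisj : Pairwise (Function.onFun Disjoint fun i ↦ Ioo (a i) (b i))) :
    Summable fun i ↦ b i - a i := by
  have hvolume : ∑' i, volume (Ioo (a i) (b i)) ≠ ⊤ := by
    rw [← measure_iUnion hdisj fun _ ↦ measurableSet_Ioo]
    exact measure_ne_top_of_subset (iUnion_subset hsub) hs
  refine (ENNReal.summable_toReal hvolume).congr fun i ↦ ?_
  rw [Real.volume_Ioo, ENNReal.toReal_ofReal (sub_nonneg.mpr (hab i))]

lemma right_notMem_Ioo_of_disjoint {X : Type*} [LinearOrder X] [DenselyOrdered X] {a b c d : X}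
    (hab : a < b) (h : Disjoint (Ioo a b) (Ioo c d)) : b ∉ Ioo c d := fun hb ↦
  (Ioo_disjoint_Ioo.mp h).not_gt <| by
    rw [min_eq_left hb.2.le]
    exact max_lt hab hb.1

end Intervals

section CantorSet

variable {a b : ℕ → ℝ}

lemma ofReal_mem_cantorAB {x : ℝ} :
    (x : ℂ) ∈ cantorAB a b ↔ x ∈ Icc (a 0) (b 0) ∧ ∀ i, 1 ≤ i → x ∉ Ioo (a i) (b i) := by
  rw [cantorAB, Complex.ofReal_injective.mem_set_image, Set.mem_sdiff, mem_iUnion, not_exists]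
  exact and_congr_right fun _ ↦
    ⟨fun h i hi ↦ Nat.sub_add_cancel hi ▸ h (i - 1), fun h i ↦ h (i + 1) i.succ_pos⟩

lemma isClosed_cantorAB (a b : ℕ → ℝ) : IsClosed (cantorAB a b) :=
  Complex.isometry_ofReal.isClosedEmbedding.isClosedMap _
    (isClosed_Icc.sdiff (isOpen_iUnion fun _ ↦ isOpen_Ioo))

lemma left_mem_cantorAB (h₀ : a 0 ≤ b 0)
    (hsub : ∀ i, 1 ≤ i → Ioo (a i) (b i) ⊆ Ioo (a 0) (b 0)) : (a 0 : ℂ) ∈ cantorAB a b :=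
  ofReal_mem_cantorAB.mpr ⟨left_mem_Icc.mpr h₀, fun i hi hmem ↦ (hsub i hi hmem).1.false⟩

lemma right_mem_cantorAB (hab : ∀ j, a j < b j)
    (hsub : ∀ i, 1 ≤ i → Ioo (a i) (b i) ⊆ Ioo (a 0) (b 0))
    (hdisj : ∀ i k, 1 ≤ i → 1 ≤ k → i ≠ k → Disjoint (Ioo (a i) (b i)) (Ioo (a k) (b k)))
    {i : ℕ} (hi : 1 ≤ i) : (b i : ℂ) ∈ cantorAB a b := by
  obtain ⟨hleft, hright⟩ := (Ioo_subset_Ioo_iff (hab i)).mp (hsub i hi)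
  refine ofReal_mem_cantorAB.mpr ⟨⟨hleft.trans (hab i).le, hright⟩, fun k hk ↦ ?_⟩
  rcases eq_or_ne i k with rfl | hik
  · exact right_notMem_Ioo
  · exact right_notMem_Ioo_of_disjoint (hab i) (hdisj i k hi hk hik)

lemma summable_sub_of_disjoint_gaps (hab : ∀ i, 1 ≤ i → a i ≤ b i)
    (hsub : ∀ i, 1 ≤ i → Ioo (a i) (b i) ⊆ Ioo (a 0) (b 0))
    (hdisj : ∀ i k, 1 ≤ i → 1 ≤ k → i ≠ k → Disjoint (Ioo (a i) (b i)) (Ioo (a k) (b k))) :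
    Summable fun i ↦ b i - a i :=
  (summable_nat_add_iff 1).mp <|
    summable_sub_of_pairwise_disjoint_Ioo measure_Ioo_lt_top.ne (fun i ↦ hab (i + 1) i.succ_pos)
      (fun i ↦ hsub (i + 1) i.succ_pos) fun i k hik ↦
        hdisj (i + 1) (k + 1) i.succ_pos k.succ_pos (Nat.succ_injective.ne hik)

end CantorSet

section PartialProducts

variable {a b : ℕ → ℝ}

/-- The sequence `b₀, a₁, a₂, …`. In `partialProd a b` the outer interval enters with its endpoints
interchanged, so the zeros of the factors are `headSwap a b` and their poles `headSwap b a`. -/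
noncomputable def headSwap (a b : ℕ → ℝ) : ℕ → ℂ
  | 0 => b 0
  | i + 1 => a (i + 1)

lemma partialProd_eq_prod_range (a b : ℕ → ℝ) (N : ℕ) (z : ℂ) :
    partialProd a b N z =
      ∏ i ∈ Finset.range (N + 1), (z - headSwap a b i) / (z - headSwap b a i) := by
  rw [Finset.prod_range_succ', mul_comm, partialProd, Finset.range_eq_Ico,
    ← Finset.Ico_add_one_right_eq_Icc, ← Finset.prod_Ico_add' _ 0 N 1]
  rfl

lemma norm_headSwap_sub (a b : ℕ → ℝ) (i : ℕ) :
    ‖headSwap b a i - headSwap a b i‖ = |b i - a i| := by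
  cases i with
  | zero =>
    rw [headSwap, headSwap, ← Complex.ofReal_sub, Complex.norm_real, Real.norm_eq_abs, abs_sub_comm]
  | succ i =>
    rw [headSwap, headSwap, ← Complex.ofReal_sub, Complex.norm_real, Real.norm_eq_abs]

lemma tendstoUniformlyOn_partialProd {K : Set ℂ} (hlength : Summable fun i ↦ b i - a i)
    (hpole : ∀ i, headSwap b a i ∈ K) {δ : ℝ} (hδ : 0 < δ) :
    TendstoUniformlyOn (partialProd a b)
      (fun z ↦ ∏' i, (z - headSwap a b i) / (z - headSwap b a i)) atTop {z | δ ≤ infDist z K} := by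
  have hnorm : Summable fun i ↦ ‖headSwap b a i - headSwap a b i‖ := by
    simpa only [norm_headSwap_sub] using hlength.abs
  have hrange := (hasProdUniformlyOn_sub_div_sub hnorm hpole hδ).tendstoUniformlyOn_finsetRange
  intro v hv
  filter_upwards [(tendsto_add_atTop_nat 1).eventually (hrange v hv)] with N hN z hz
  simpa only [partialProd_eq_prod_range] using hN z hz

lemma differentiableAt_partialProd {z : ℂ} (hz : ∀ i, z ≠ headSwap b a i) (N : ℕ) :
    DifferentiableAt ℂ (partialProd a b N) z := by
  rw [funext (partialProd_eq_prod_range a b N)]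
  refine DifferentiableAt.fun_finsetProd fun i _ ↦ ?_
  exact .fun_div (by fun_prop) (by fun_prop) (sub_ne_zero.mpr (hz i))

end PartialProducts

theorem stmt0_general (a b : ℕ → ℝ) (hab : ∀ j, a j < b j)
    (hsub : ∀ i, 1 ≤ i → Ioo (a i) (b i) ⊆ Ioo (a 0) (b 0))
    (hdisj : ∀ i k, 1 ≤ i → 1 ≤ k → i ≠ k → Disjoint (Ioo (a i) (b i)) (Ioo (a k) (b k))) :
    ∃ f : ℂ → ℂ,
      (∀ δ : ℝ, 0 < δ →
        TendstoUniformlyOn (partialProd a b) f atTop {z : ℂ | δ ≤ infDist z (cantorAB a b)}) ∧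
      (∀ z ∉ cantorAB a b, Tendsto (fun N ↦ partialProd a b N z) atTop (𝓝 (f z))) ∧
      DifferentiableOn ℂ f (cantorAB a b)ᶜ := by
  have hpole : ∀ i, headSwap b a i ∈ cantorAB a b
    | 0 => left_mem_cantorAB (hab 0).le hsub
    | i + 1 => right_mem_cantorAB hab hsub hdisj i.succ_pos
  have hclosed := isClosed_cantorAB a b
  have hlength := summable_sub_of_disjoint_gaps (fun i _ ↦ (hab i).le) hsub hdisj
  have hunif := fun δ hδ ↦ tendstoUniformlyOn_partialProd (δ := δ) hlength hpole hδ
  have hloc := tendstoLocallyUniformlyOn_compl_of_le_infDist hclosed ⟨_, hpole 0⟩ hunif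
  refine ⟨_, hunif, fun z hz ↦ hloc.tendsto_at hz, ?_⟩
  refine hloc.differentiableOn (.of_forall fun N z hz ↦ ?_) hclosed.isOpen_compl
  have hne (i : ℕ) : z ≠ headSwap b a i := (ne_of_mem_of_not_mem (hpole i) hz).symm
  exact (differentiableAt_partialProd hne N).differentiableWithinAt

/-- the partial products f^N converge uniformly on each
Ω_δ = {z : dist(z, 𝒞(a,b)) ≥ δ} (δ > 0) to a limit f_{a,b}; in particular the infinite
product converges at every point of ℂ ∖ 𝒞(a,b) and defines a holomorphic function there. -/
theorem stmt0 (a b : ℕ → ℝ)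
    (hab : ∀ j, a j < b j)
    (hsub : ∀ i, 1 ≤ i → Set.Icc (a i) (b i) ⊆ Set.Ioo (a 0) (b 0))
    (hdisj : ∀ i k, 1 ≤ i → 1 ≤ k → i ≠ k →
      Disjoint (Set.Icc (a i) (b i)) (Set.Icc (a k) (b k))) :
    ∃ f : ℂ → ℂ,
      (∀ δ : ℝ, 0 < δ →
        TendstoUniformlyOn (partialProd a b) f atTop
          {z : ℂ | δ ≤ Metric.infDist z (cantorAB a b)}) ∧
      (∀ z ∉ cantorAB a b,
        Tendsto (fun N => partialProd a b N z) atTop (𝓝 (f z))) ∧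
      DifferentiableOn ℂ f (cantorAB a b)ᶜ :=
  stmt0_general a b hab (fun i hi ↦ Ioo_subset_Icc_self.trans (hsub i hi))
    fun i k hi hk hik ↦ (hdisj i k hi hk hik).mono Ioo_subset_Icc_self Ioo_subset_Icc_self
end

section
/- For every N ≥ 1 there exists a unique holomorphic function g^N_+ on the open set D_N = ℂ ∖ ([a_0, b_0] ∖ ⋃_{j=1}^N (a_j, b_j)) such that (g^N_+(z))² = f^N(z) for all z ∈ D_N and g^N_+(z) → 1 as |z| → ∞; moreover g^N_− := −g^N_+ is the unique holomorphic function on D_N whose square is f^N and which tends to −1 as |z| → ∞. -/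
open Filter Topology

/-- D_N = ℂ ∖ ([a₀,b₀] ∖ ⋃_{j=1}^N (a_j,b_j)). -/
noncomputable def domDN (a b : ℕ → ℝ) (N : ℕ) : Set ℂ :=
  ((fun x : ℝ => (x : ℂ)) ''
    (Set.Icc (a 0) (b 0) \ ⋃ j ∈ Set.Icc 1 N, Set.Ioo (a j) (b j)))ᶜ

/-!
Let `K` be the branch cut, that is, `[a 0, b 0]` without the gaps `(a j, b j)`. Integrating
`1 / (t - z)` over an interval with endpoints `p` and `q` gives a logarithm of
`(z - q) / (z - p)`, so by additivity in the domain of integration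
`exp (∫ t in K, 1 / (t - z)) = f^N(z)` whenever `z ∉ [a 0, b 0]`. The left-hand side is holomorphic
off `K` and the right-hand side is continuous there, because every pole of `f^N` lies in `K`; hence
the identity persists inside the gaps. Halving the exponent gives a nowhere vanishing square root
with limit `1` at infinity. Since the complement of `K` is connected, any other continuous square
root is the negative of this one, and the limit at infinity tells the two apart.
-/

open MeasureTheory Set Bornology

lemma eqOn_of_sq_eqOn_of_tendsto {X 𝕜 : Type*} [TopologicalSpace X] [Field 𝕜]
    [TopologicalSpace 𝕜] [IsTopologicalDivisionRing 𝕜] [T2Space 𝕜] {D : Set X}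
    (hD : IsPreconnected D) {g h : X → 𝕜} (hg : ContinuousOn g D) (hh : ContinuousOn h D)
    (hsq : EqOn (h ^ 2) (g ^ 2) D) (hne : ∀ x ∈ D, g x ≠ 0) {l : Filter X} [l.NeBot]
    (hDl : D ∈ l) {c : 𝕜} (hc : c ≠ -c) (hgc : Tendsto g l (𝓝 c)) (hhc : Tendsto h l (𝓝 c)) :
    EqOn h g D := by
  rcases hD.eq_or_eq_neg_of_sq_eq hh hg hsq (hne _) with heq | heq
  · exact heq
  · have hneg : Tendsto h l (𝓝 (-c)) := hgc.neg.congr' (heq.symm.eventuallyEq_of_mem hDl)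
    exact absurd (tendsto_nhds_unique hhc hneg) hc

lemma isPreconnected_compl_ofReal_image {K : Set ℝ} (hK : K ≠ univ) :
    IsPreconnected (Complex.ofReal '' K)ᶜ := by
  set D : Set ℂ := (Complex.ofReal '' K)ᶜ
  have mem_of_im_ne_zero : ∀ z : ℂ, z.im ≠ 0 → z ∈ D := by
    rintro z hz ⟨x, -, rfl⟩
    exact hz (Complex.ofReal_im x)
  have hupper : IsPreconnected (D ∩ {z : ℂ | 0 ≤ z.im}) := by
    refine (convex_halfSpace_im_gt 0).isPreconnected.subset_closure
      (fun z (hz : 0 < z.im) => ⟨mem_of_im_ne_zero z hz.ne', hz.le⟩) ?_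
    rw [Complex.closure_setOfPred_lt_im]
    exact inter_subset_right
  have hlower : IsPreconnected (D ∩ {z : ℂ | z.im ≤ 0}) := by
    refine (convex_halfSpace_im_lt 0).isPreconnected.subset_closure
      (fun z (hz : z.im < 0) => ⟨mem_of_im_ne_zero z hz.ne, hz.le⟩) ?_
    rw [Complex.closure_setOfPred_im_lt]
    exact inter_subset_right
  obtain ⟨x, hx⟩ := (ne_univ_iff_exists_notMem K).1 hK
  have hxD : (x : ℂ) ∈ D := fun h => hx (Complex.ofReal_injective.mem_set_image.1 h)
  have hcover : D = (D ∩ {z : ℂ | 0 ≤ z.im}) ∪ (D ∩ {z : ℂ | z.im ≤ 0}) := by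
    rw [← inter_union_distrib_left]
    exact (inter_eq_left.2 fun z _ => le_total 0 z.im).symm
  rw [hcover]
  exact hupper.union' ⟨x, ⟨hxD, (Complex.ofReal_im x).ge⟩, hxD, (Complex.ofReal_im x).le⟩ hlower

lemma resolvent_ofReal (z : ℂ) (t : ℝ) : resolvent z t = ((t : ℂ) - z)⁻¹ :=
  Ring.inverse_eq_inv _

lemma tendsto_resolventTransform_cobounded {μ : Measure ℝ} [IsFiniteMeasure μ]
    (hμ : IsBounded μ.support) :
    Tendsto (resolventTransform μ : ℂ → ℂ) (cobounded ℂ) (𝓝 0) := by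
  obtain ⟨R, hR⟩ := hμ.exists_norm_le
  have : (cobounded ℂ).IsCountablyGenerated := by
    rw [← comap_norm_atTop]
    infer_instance
  have h_bound : ∀ᶠ z : ℂ in cobounded ℂ, ∀ᵐ t ∂μ, ‖resolvent z t‖ ≤ 1 := by
    filter_upwards [tendsto_norm_cobounded_atTop.eventually_ge_atTop (R + 1)] with z hz
    filter_upwards [Measure.support_mem_ae] with t ht
    have htriangle : ‖z‖ ≤ ‖(t : ℂ)‖ + ‖(t : ℂ) - z‖ := norm_le_norm_add_norm_sub _ _
    have htR : ‖(t : ℂ)‖ ≤ R := (Complex.norm_real t).trans_le (hR t ht)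
    rw [resolvent_ofReal, norm_inv]
    exact inv_le_one_of_one_le₀ (by linarith)
  have h_lim (t : ℝ) : Tendsto (fun z : ℂ => resolvent z t) (cobounded ℂ) (𝓝 0) := by
    simp only [resolvent_ofReal]
    exact tendsto_inv₀_cobounded.comp (tendsto_const_sub_cobounded (t : ℂ))
  simpa only [resolventTransform_def, integral_zero] using
    tendsto_integral_filter_of_dominated_convergence (fun _ => 1)
      (.of_forall fun z => by fun_prop) h_bound (integrable_const 1) (.of_forall h_lim)

lemma support_restrict_subset_of_isClosed {X : Type*} [TopologicalSpace X]
    [MeasurableSpace X] [OpensMeasurableSpace X] {μ : Measure X} {K : Set X} (hK : IsClosed K) :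
    (μ.restrict K).support ⊆ K :=
  Measure.support_restrict_subset.trans (inter_subset_left.trans hK.closure_eq.subset)

lemma differentiableOn_resolventTransform_restrict {K : Set ℝ} (hK : IsCompact K) :
    DifferentiableOn ℂ (resolventTransform (volume.restrict K)) (Complex.ofReal '' K)ᶜ := by
  have : IsFiniteMeasure (volume.restrict K) := isFiniteMeasure_restrict.2 hK.measure_ne_top
  exact analyticOn_resolventTransform.differentiableOn.mono
    (compl_subset_compl.2 (image_mono (support_restrict_subset_of_isClosed hK.isClosed)))

/-- The function `exp (1/2 * ∫ t in K, 1 / (t - z))` of `z` off the cut `K`; for the cut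
`gappedIcc` it is the square root of `gapProduct` that tends to `1` at infinity. -/
noncomputable def cutSqrt (K : Set ℝ) (z : ℂ) : ℂ :=
  Complex.exp (resolventTransform (volume.restrict K) z / 2)

lemma cutSqrt_ne_zero (K : Set ℝ) (z : ℂ) : cutSqrt K z ≠ 0 :=
  Complex.exp_ne_zero _

lemma cutSqrt_sq (K : Set ℝ) (z : ℂ) :
    cutSqrt K z ^ 2 = Complex.exp (resolventTransform (volume.restrict K) z) := by
  rw [cutSqrt, ← Complex.exp_nat_mul, Nat.cast_ofNat, mul_div_cancel₀ _ two_ne_zero]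

lemma differentiableOn_cutSqrt {K : Set ℝ} (hK : IsCompact K) :
    DifferentiableOn ℂ (cutSqrt K) (Complex.ofReal '' K)ᶜ :=
  ((differentiableOn_resolventTransform_restrict hK).div_const 2).cexp

lemma tendsto_cutSqrt_cobounded {K : Set ℝ} (hK : IsCompact K) :
    Tendsto (cutSqrt K) (cobounded ℂ) (𝓝 1) := by
  have : IsFiniteMeasure (volume.restrict K) := isFiniteMeasure_restrict.2 hK.measure_ne_top
  have hsupport : IsBounded (volume.restrict K).support :=
    hK.isBounded.subset (support_restrict_subset_of_isClosed hK.isClosed)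
  have hlim : Tendsto (cutSqrt K) (cobounded ℂ) (𝓝 (Complex.exp (0 / 2))) :=
    ((tendsto_resolventTransform_cobounded hsupport).div_const 2).cexp
  rwa [zero_div, Complex.exp_zero] at hlim

lemma sub_div_sub_mem_slitPlane {u v z : ℂ} (hz : z ∉ segment ℝ u v) :
    (v - z) / (u - z) ∈ Complex.slitPlane := by
  have hu : u - z ≠ 0 := fun h => hz (sub_eq_zero.1 h ▸ left_mem_segment ℝ u v)
  rw [Complex.mem_slitPlane_iff_not_le_zero]
  intro hle
  obtain ⟨r, hr, hrz⟩ : ∃ r : ℝ, r ≤ 0 ∧ (r : ℂ) = (v - z) / (u - z) :=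
    ⟨_, (Complex.nonpos_iff.1 hle).1, Complex.ext rfl (Complex.nonpos_iff.1 hle).2.symm⟩
  have hpos : 0 < 1 - r := by linarith
  have hne : (1 : ℂ) - r ≠ 0 := mod_cast hpos.ne'
  refine hz ⟨-r / (1 - r), 1 / (1 - r), div_nonneg (neg_nonneg.2 hr) hpos.le, by positivity,
    by field_simp; ring, ?_⟩
  rw [eq_div_iff hu] at hrz
  simp only [Complex.real_smul]
  push_cast
  field_simp
  linear_combination -hrz

lemma continuousOn_resolvent_ofReal {S : Set ℝ} {z : ℂ} (hz : z ∉ Complex.ofReal '' S) :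
    ContinuousOn (fun t : ℝ => resolvent z t) S := by
  simp only [resolvent_ofReal]
  exact (Complex.continuous_ofReal.sub continuous_const).continuousOn.inv₀
    fun t ht h => hz ⟨t, ht, sub_eq_zero.1 h⟩

lemma exp_intervalIntegral_resolvent {p q : ℝ} {z : ℂ} (hz : z ∉ Complex.ofReal '' uIcc p q) :
    Complex.exp (∫ t in p..q, resolvent z t) = (z - q) / (z - p) := by
  have hp : (p : ℂ) - z ≠ 0 := fun h => hz ⟨p, left_mem_uIcc, sub_eq_zero.1 h⟩
  have hslit : ∀ t ∈ uIcc p q, ((t : ℂ) - z) / (p - z) ∈ Complex.slitPlane := by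
    intro t ht
    have hsegment : Complex.ofReal '' uIcc p t = segment ℝ (p : ℂ) t := by
      rw [← segment_eq_uIcc]
      exact image_segment ℝ Complex.ofRealCLM.toLinearMap.toAffineMap p t
    exact sub_div_sub_mem_slitPlane
      (hsegment ▸ fun hzt => hz (image_mono (uIcc_subset_uIcc_left ht) hzt))
  have hderiv : ∀ t ∈ uIcc p q,
      HasDerivAt (fun t : ℝ => Complex.log (((t : ℂ) - z) / (p - z))) (resolvent z t) t := by
    intro t ht
    have h := (((hasDerivAt_id t).ofReal_comp.sub_const z).div_const (p - z)).clog_real (hslit t ht)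
    rwa [div_div_div_cancel_right₀ hp, Complex.ofReal_one, one_div, ← resolvent_ofReal] at h
  rw [intervalIntegral.integral_eq_sub_of_hasDerivAt hderiv
      (continuousOn_resolvent_ofReal hz).intervalIntegrable,
    div_self hp, Complex.log_one, sub_zero,
    Complex.exp_log (Complex.slitPlane_ne_zero (hslit q right_mem_uIcc)),
    ← neg_sub z, ← neg_sub z, neg_div_neg_eq]

section Gaps

variable {ι : Type*} {s : Finset ι} {p q : ℝ} {a b : ι → ℝ}

/-- The interval `[p, q]` with the gaps `(a i, b i)`, `i ∈ s`, removed: the branch cut of the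
square root. -/
def gappedIcc (p q : ℝ) (s : Finset ι) (a b : ι → ℝ) : Set ℝ :=
  Icc p q \ ⋃ i ∈ s, Ioo (a i) (b i)

/-- The rational function `(z - q) / (z - p) * ∏ i ∈ s, (z - a i) / (z - b i)` attached to the
interval `[p, q]` with the gaps `(a i, b i)`; as `x / 0 = 0`, it takes the value `0` at its
poles. -/
noncomputable def gapProduct (p q : ℝ) (s : Finset ι) (a b : ι → ℝ) (z : ℂ) : ℂ :=
  (z - q) / (z - p) * ∏ i ∈ s, (z - a i) / (z - b i)

lemma isCompact_gappedIcc : IsCompact (gappedIcc p q s a b) :=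
  isCompact_Icc.diff (isOpen_biUnion fun _ _ => isOpen_Ioo)

lemma left_mem_gappedIcc (hpq : p ≤ q) (hsub : ∀ i ∈ s, Icc (a i) (b i) ⊆ Icc p q) :
    p ∈ gappedIcc p q s a b := by
  refine ⟨left_mem_Icc.2 hpq, ?_⟩
  simp only [mem_iUnion, not_exists]
  intro i hi hp
  exact (hsub i hi (left_mem_Icc.2 (hp.1.trans hp.2).le)).1.not_gt hp.1

lemma right_endpoint_mem_gappedIcc (hab : ∀ i ∈ s, a i < b i)
    (hsub : ∀ i ∈ s, Icc (a i) (b i) ⊆ Icc p q)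
    (hdisj : (s : Set ι).PairwiseDisjoint fun i => Ioo (a i) (b i)) {i : ι} (hi : i ∈ s) :
    b i ∈ gappedIcc p q s a b := by
  have hbi : b i ∈ Icc (a i) (b i) := right_mem_Icc.2 (hab i hi).le
  refine ⟨hsub i hi hbi, ?_⟩
  simp only [mem_iUnion, not_exists]
  intro j hj hbj
  have hij : i ≠ j := by
    rintro rfl
    exact hbj.2.false
  have hclosure : Disjoint (Icc (a i) (b i)) (Ioo (a j) (b j)) := by
    rw [← closure_Ioo (hab i hi).ne]
    exact (hdisj hi hj hij).closure_left isOpen_Ioo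
  exact hclosure.notMem_of_mem_left hbi hbj

lemma continuousOn_gapProduct (hpq : p ≤ q) (hab : ∀ i ∈ s, a i < b i)
    (hsub : ∀ i ∈ s, Icc (a i) (b i) ⊆ Icc p q)
    (hdisj : (s : Set ι).PairwiseDisjoint fun i => Ioo (a i) (b i)) :
    ContinuousOn (gapProduct p q s a b) (Complex.ofReal '' gappedIcc p q s a b)ᶜ := by
  have hdiv (u : ℝ) {v : ℝ} (hv : v ∈ gappedIcc p q s a b) :
      ContinuousOn (fun z : ℂ => (z - u) / (z - v)) (Complex.ofReal '' gappedIcc p q s a b)ᶜ :=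
    (continuousOn_id.sub continuousOn_const).div (continuousOn_id.sub continuousOn_const)
      fun z hz h => hz ⟨v, hv, (sub_eq_zero.1 h).symm⟩
  exact (hdiv q (left_mem_gappedIcc hpq hsub)).mul <| continuousOn_finsetProd _ fun i hi =>
    hdiv (a i) (right_endpoint_mem_gappedIcc hab hsub hdisj hi)

lemma exp_resolventTransform_gappedIcc (hpq : p ≤ q) (hab : ∀ i ∈ s, a i ≤ b i)
    (hsub : ∀ i ∈ s, Icc (a i) (b i) ⊆ Icc p q)
    (hdisj : (s : Set ι).PairwiseDisjoint fun i => Ioo (a i) (b i))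
    {z : ℂ} (hz : z ∉ Complex.ofReal '' Icc p q) :
    Complex.exp (resolventTransform (volume.restrict (gappedIcc p q s a b)) z) =
      gapProduct p q s a b z := by
  have hgap : ∀ i ∈ s, Ioo (a i) (b i) ⊆ Icc p q := fun i hi =>
    Ioo_subset_Icc_self.trans (hsub i hi)
  have hint : IntegrableOn (fun t : ℝ => resolvent z t) (Icc p q) :=
    (continuousOn_resolvent_ofReal hz).integrableOn_Icc
  have hsum : resolventTransform (volume.restrict (gappedIcc p q s a b)) z =
      (∫ t in p..q, resolvent z t) - ∑ i ∈ s, ∫ t in a i..b i, resolvent z t := by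
    rw [resolventTransform_apply, gappedIcc,
      setIntegral_sdiff (s.measurableSet_biUnion fun _ _ => measurableSet_Ioo) hint
        (iUnion₂_subset hgap),
      integral_biUnion_finset s (fun _ _ => measurableSet_Ioo) hdisj
        fun i hi => hint.mono_set (hgap i hi),
      intervalIntegral.integral_of_le hpq, integral_Icc_eq_integral_Ioc]
    refine congrArg _ (Finset.sum_congr rfl fun i hi => ?_)
    rw [intervalIntegral.integral_of_le (hab i hi), integral_Ioc_eq_integral_Ioo]
  rw [hsum, Complex.exp_sub, Complex.exp_sum, gapProduct, div_eq_mul_inv, ← Finset.prod_inv_distrib,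
    exp_intervalIntegral_resolvent (by rwa [uIcc_of_le hpq])]
  refine congrArg _ (Finset.prod_congr rfl fun i hi => ?_)
  have hzi : z ∉ Complex.ofReal '' uIcc (a i) (b i) := by
    rw [uIcc_of_le (hab i hi)]
    exact fun h => hz (image_mono (hsub i hi) h)
  rw [exp_intervalIntegral_resolvent hzi, inv_div]

lemma cutSqrt_sq_eqOn_gapProduct (hpq : p ≤ q) (hab : ∀ i ∈ s, a i < b i)
    (hsub : ∀ i ∈ s, Icc (a i) (b i) ⊆ Icc p q)
    (hdisj : (s : Set ι).PairwiseDisjoint fun i => Ioo (a i) (b i)) :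
    EqOn (fun z => cutSqrt (gappedIcc p q s a b) z ^ 2) (gapProduct p q s a b)
      (Complex.ofReal '' gappedIcc p q s a b)ᶜ := by
  have hdense : Dense (Complex.im ⁻¹' {0}ᶜ) :=
    (dense_compl_singleton 0).preimage Complex.isOpenMap_im
  have hnotMem (S : Set ℝ) : ∀ z ∈ Complex.im ⁻¹' {0}ᶜ, z ∉ Complex.ofReal '' S := by
    rintro _ hz ⟨x, -, rfl⟩
    exact hz (Complex.ofReal_im x)
  have hnonreal : EqOn (fun z => cutSqrt (gappedIcc p q s a b) z ^ 2) (gapProduct p q s a b)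
      (Complex.im ⁻¹' {0}ᶜ) := fun z hz =>
    (cutSqrt_sq _ z).trans <| exp_resolventTransform_gappedIcc hpq (fun i hi => (hab i hi).le)
      hsub hdisj (hnotMem _ z hz)
  exact hnonreal.of_subset_closure
    ((differentiableOn_cutSqrt isCompact_gappedIcc).continuousOn.pow 2)
    (continuousOn_gapProduct hpq hab hsub hdisj) (hnotMem _)
    (hdense.closure_eq.symm ▸ subset_univ _)

end Gaps

theorem stmt6_general {ι : Type*} (s : Finset ι) {p q : ℝ} (hpq : p ≤ q) {a b : ι → ℝ}
    (hab : ∀ i ∈ s, a i < b i) (hsub : ∀ i ∈ s, Icc (a i) (b i) ⊆ Icc p q)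
    (hdisj : (s : Set ι).PairwiseDisjoint fun i => Ioo (a i) (b i))
    {D : Set ℂ} (hD : D = (Complex.ofReal '' gappedIcc p q s a b)ᶜ) :
    ∃ g : ℂ → ℂ,
      (DifferentiableOn ℂ g D ∧ (∀ z ∈ D, g z ^ 2 = gapProduct p q s a b z) ∧
        Tendsto g (cobounded ℂ) (𝓝 1)) ∧
      (∀ h : ℂ → ℂ, DifferentiableOn ℂ h D → (∀ z ∈ D, h z ^ 2 = gapProduct p q s a b z) →
        Tendsto h (cobounded ℂ) (𝓝 1) → EqOn h g D) ∧
      (DifferentiableOn ℂ (fun z => -g z) D ∧ (∀ z ∈ D, (-g z) ^ 2 = gapProduct p q s a b z) ∧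
        Tendsto (fun z => -g z) (cobounded ℂ) (𝓝 (-1))) ∧
      (∀ h : ℂ → ℂ, DifferentiableOn ℂ h D → (∀ z ∈ D, h z ^ 2 = gapProduct p q s a b z) →
        Tendsto h (cobounded ℂ) (𝓝 (-1)) → EqOn h (fun z => -g z) D) := by
  subst hD
  set K := gappedIcc p q s a b
  have hK : IsCompact K := isCompact_gappedIcc
  have hconn : IsPreconnected (Complex.ofReal '' K)ᶜ :=
    isPreconnected_compl_ofReal_image hK.ne_univ
  have hinf : (Complex.ofReal '' K)ᶜ ∈ cobounded ℂ :=
    (hK.image Complex.continuous_ofReal).isBounded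
  have hdiff := differentiableOn_cutSqrt hK
  have hsq := cutSqrt_sq_eqOn_gapProduct hpq hab hsub hdisj
  have hlim := tendsto_cutSqrt_cobounded hK
  refine ⟨cutSqrt K, ⟨hdiff, hsq, hlim⟩, fun h hh hh_sq hh_lim => ?_,
    ⟨hdiff.neg, fun z hz => (neg_sq _).trans (hsq hz), hlim.neg⟩, fun h hh hh_sq hh_lim => ?_⟩
  · exact eqOn_of_sq_eqOn_of_tendsto hconn hdiff.continuousOn hh.continuousOn
      (fun z hz => (hh_sq z hz).trans (hsq hz).symm) (fun z _ => cutSqrt_ne_zero K z) hinf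
      (self_ne_neg.2 one_ne_zero) hlim hh_lim
  · exact eqOn_of_sq_eqOn_of_tendsto hconn hdiff.neg.continuousOn hh.continuousOn
      (fun z hz => (hh_sq z hz).trans ((neg_sq _).trans (hsq hz)).symm)
      (fun z _ => neg_ne_zero.2 (cutSqrt_ne_zero K z)) hinf
      (self_ne_neg.2 (neg_ne_zero.2 one_ne_zero)) hlim.neg hh_lim

/-- for every N ≥ 1 there is a unique holomorphic g₊ on D_N with g₊² = f^N
and g₊ → 1 at ∞; moreover g₋ = −g₊ is the unique holomorphic square root of f^N on D_N
tending to −1 at ∞. -/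
theorem stmt6 (a b : ℕ → ℝ)
    (hab : ∀ j, a j < b j)
    (hsub : ∀ i, 1 ≤ i → Set.Icc (a i) (b i) ⊆ Set.Ioo (a 0) (b 0))
    (hdisj : ∀ i k, 1 ≤ i → 1 ≤ k → i ≠ k →
      Disjoint (Set.Icc (a i) (b i)) (Set.Icc (a k) (b k)))
    (N : ℕ) (hN : 1 ≤ N) :
    ∃ g : ℂ → ℂ,
      (DifferentiableOn ℂ g (domDN a b N) ∧
        (∀ z ∈ domDN a b N, g z ^ 2 = partialProd a b N z) ∧
        Tendsto g (Bornology.cobounded ℂ) (𝓝 1)) ∧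
      (∀ h : ℂ → ℂ, DifferentiableOn ℂ h (domDN a b N) →
        (∀ z ∈ domDN a b N, h z ^ 2 = partialProd a b N z) →
        Tendsto h (Bornology.cobounded ℂ) (𝓝 1) →
        Set.EqOn h g (domDN a b N)) ∧
      (DifferentiableOn ℂ (fun z => -g z) (domDN a b N) ∧
        (∀ z ∈ domDN a b N, (-g z) ^ 2 = partialProd a b N z) ∧
        Tendsto (fun z => -g z) (Bornology.cobounded ℂ) (𝓝 (-1))) ∧
      (∀ h : ℂ → ℂ, DifferentiableOn ℂ h (domDN a b N) →
        (∀ z ∈ domDN a b N, h z ^ 2 = partialProd a b N z) →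
        Tendsto h (Bornology.cobounded ℂ) (𝓝 (-1)) →
        Set.EqOn h (fun z => -g z) (domDN a b N)) := by
  refine stmt6_general (Finset.Icc 1 N) (hab 0).le (fun i _ => hab i) (fun i hi => ?_)
    (fun i hi k hk hik => ?_) (by simp only [domDN, gappedIcc, Finset.mem_Icc, mem_Icc])
  · exact (hsub i (Finset.mem_Icc.1 hi).1).trans Ioo_subset_Icc_self
  · exact (hdisj i k (Finset.mem_Icc.1 hi).1 (Finset.mem_Icc.1 hk).1 hik).mono
      Ioo_subset_Icc_self Ioo_subset_Icc_self
end

section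
/- The open set D = ℂ ∖ 𝒞(a,b) is connected, and the only holomorphic functions h on D satisfying h(z)² = f_{a,b}(z) for all z ∈ D are h = g_+ and h = −g_+; in particular the maximal analytic continuation of g_+ is single-valued on D. -/
open Filter Topology

/- A subset `s` of a hyperplane leaves both open half-spaces untouched. Each open half-space is
convex and dense in the closed one, so the part of `sᶜ` in either closed half-space is connected; a
point of the hyperplane outside `s` lies in both parts and glues them. Hence `sᶜ` is connected, and
the quotient of two continuous square roots of the same nonvanishing function, being `±1`-valued and
continuous on `sᶜ`, is constant there. The set `𝒞(a,b)` is such an `s`, in the real line of `ℂ`. -/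

section Hyperplane

variable {E : Type*} [AddCommGroup E] [Module ℝ E] [TopologicalSpace E] [ContinuousAdd E]
  [ContinuousSMul ℝ E] {φ : StrongDual ℝ E} {c : ℝ} {s : Set E}

theorem isPreconnected_of_halfSpace_lt_subset (hφ : φ ≠ 0) (hlt : {x | φ x < c} ⊆ s)
    (hle : s ⊆ {x | φ x ≤ c}) : IsPreconnected s := by
  have hclosure : closure {x | φ x < c} = {x | φ x ≤ c} :=
    calc closure (φ ⁻¹' Set.Iio c)
      _ = φ ⁻¹' closure (Set.Iio c) :=
        ((φ.isOpenMap_of_ne_zero hφ).preimage_closure_eq_closure_preimage φ.continuous _).symm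
      _ = φ ⁻¹' Set.Iic c := by rw [closure_Iio]
  exact (convex_halfSpace_lt φ.toLinearMap.isLinear c).isPreconnected.subset_closure hlt
    (hle.trans hclosure.superset)

theorem isPreconnected_of_halfSpace_gt_subset (hφ : φ ≠ 0) (hgt : {x | c < φ x} ⊆ s)
    (hge : s ⊆ {x | c ≤ φ x}) : IsPreconnected s :=
  isPreconnected_of_halfSpace_lt_subset (φ := -φ) (c := -c) (neg_ne_zero.mpr hφ)
    (by simpa using hgt) (by simpa using hge)

theorem isConnected_compl_of_ssubset_hyperplane (hφ : φ ≠ 0) (hs : s ⊂ {x | φ x = c}) :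
    IsConnected sᶜ := by
  obtain ⟨p, hpc, hps⟩ := Set.exists_of_ssubset hs
  have hlower : IsPreconnected (sᶜ ∩ {x | φ x ≤ c}) :=
    isPreconnected_of_halfSpace_lt_subset hφ
      (fun x (hx : φ x < c) => ⟨fun hxs => hx.ne (hs.subset hxs), hx.le⟩) Set.inter_subset_right
  have hupper : IsPreconnected (sᶜ ∩ {x | c ≤ φ x}) :=
    isPreconnected_of_halfSpace_gt_subset hφ
      (fun x (hx : c < φ x) => ⟨fun hxs => hx.ne' (hs.subset hxs), hx.le⟩) Set.inter_subset_right
  have hcover : (sᶜ ∩ {x | φ x ≤ c}) ∪ (sᶜ ∩ {x | c ≤ φ x}) = sᶜ := by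
    rw [← Set.inter_union_distrib_left, Set.inter_eq_left]
    exact fun x _ => le_total (φ x) c
  exact ⟨⟨p, hps⟩, hcover ▸ hlower.union p ⟨hps, hpc.le⟩ ⟨hps, hpc.ge⟩ hupper⟩

theorem stmt10_general {𝕜 : Type*} [Field 𝕜] [TopologicalSpace 𝕜] [T1Space 𝕜] [ContinuousInv₀ 𝕜]
    [ContinuousMul 𝕜] (hφ : φ ≠ 0) (hs : s ⊂ {x | φ x = c}) {f g : E → 𝕜}
    (hfne : ∀ x ∉ s, f x ≠ 0) (hg : ContinuousOn g sᶜ) (hgsq : ∀ x ∉ s, g x ^ 2 = f x) :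
    IsConnected sᶜ ∧ ∀ h : E → 𝕜, ContinuousOn h sᶜ → (∀ x ∉ s, h x ^ 2 = f x) →
      (Set.EqOn h g sᶜ ∨ Set.EqOn h (fun x => -g x) sᶜ) := by
  have hconn : IsConnected sᶜ := isConnected_compl_of_ssubset_hyperplane hφ hs
  have hgne : ∀ x ∉ s, g x ≠ 0 := fun x hx =>
    (pow_ne_zero_iff two_ne_zero).mp ((hgsq x hx).trans_ne (hfne x hx))
  exact ⟨hconn, fun h hh hhsq => hconn.isPreconnected.eq_or_eq_neg_of_sq_eq hh hg
    (fun x hx => (hhsq x hx).trans (hgsq x hx).symm) (hgne _)⟩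

end Hyperplane

theorem cantorAB_ssubset_im_eq_zero (a b : ℕ → ℝ) : cantorAB a b ⊂ {z | z.im = 0} := by
  refine (Set.ssubset_iff_of_subset ?_).mpr ⟨((b 0 + 1 : ℝ) : ℂ), Complex.ofReal_im (b 0 + 1), ?_⟩
  · rintro _ ⟨x, -, rfl⟩
    exact Complex.ofReal_im x
  · rintro ⟨x, ⟨hx, -⟩, hxb⟩
    have hx_eq : x = b 0 + 1 := Complex.ofReal_injective hxb
    linarith [hx.2]

theorem imCLM_ne_zero : Complex.imCLM ≠ 0 :=
  fun h => one_ne_zero (DFunLike.congr_fun h Complex.I)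

/-- D = ℂ ∖ 𝒞(a,b) is connected, and the only holomorphic square roots of
f_{a,b} on D are g₊ and −g₊. -/
theorem stmt10 (a b : ℕ → ℝ)
    (hab : ∀ j, a j < b j)
    (hsub : ∀ i, 1 ≤ i → Set.Icc (a i) (b i) ⊆ Set.Ioo (a 0) (b 0))
    (hdisj : ∀ i k, 1 ≤ i → 1 ≤ k → i ≠ k →
      Disjoint (Set.Icc (a i) (b i)) (Set.Icc (a k) (b k)))
    (f : ℂ → ℂ)
    (hf : ∀ z ∉ cantorAB a b,
      Tendsto (fun N => partialProd a b N z) atTop (𝓝 (f z)))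
    (hfdiff : DifferentiableOn ℂ f (cantorAB a b)ᶜ)
    (hfne : ∀ z ∉ cantorAB a b, f z ≠ 0)
    (gplus : ℂ → ℂ)
    (hgdiff : DifferentiableOn ℂ gplus (cantorAB a b)ᶜ)
    (hgsq : ∀ z ∉ cantorAB a b, gplus z ^ 2 = f z)
    (hglim : Tendsto gplus (Bornology.cobounded ℂ) (𝓝 1)) :
    IsConnected ((cantorAB a b)ᶜ) ∧
    ∀ h : ℂ → ℂ, DifferentiableOn ℂ h (cantorAB a b)ᶜ →
      (∀ z ∉ cantorAB a b, h z ^ 2 = f z) →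
      (Set.EqOn h gplus (cantorAB a b)ᶜ ∨
        Set.EqOn h (fun z => -gplus z) (cantorAB a b)ᶜ) := by
  obtain ⟨hconn, hroots⟩ := stmt10_general imCLM_ne_zero (cantorAB_ssubset_im_eq_zero a b) hfne
    hgdiff.continuousOn hgsq
  exact ⟨hconn, fun h hh => hroots h hh.continuousOn⟩
end
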